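/- Assume that G is connected, that V* is nonempty, and that for each vertex v ∈ V the neighbors of v are pairwise inequivalent with respect to v (i.e. no two distinct neighbors u, w of v satisfy V''_{vu}(·) = V''_{vw}(· + δ) for some δ ∈ ℝ). Then the network is controllable, i.e. ∂_{q_v} ∈ 𝓜 and ∂_{p_v} ∈ 𝓜 for every v ∈ V. -/

import Mathlib

/-!
If `∂_{p_v} ∈ 𝓜`, then `[∂_{p_v}, X₀] = ∂_{q_v} - γ_v ∂_{p_v}` gives `∂_{q_v} ∈ 𝓜`, and
`[∂_{q_v}, X₀]` gives, up to a smooth multiple of `∂_{p_v}`, the field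
`∑_w V''_{vw}(q_v - q_w) ∂_{p_w}` over the neighbours `w` of `v`, where terms with
`∂_{p_w} ∈ 𝓜` may be dropped. Let `S` be the linear space of families of polynomials `(g_w)` with
`g_v = 0` and `∑_w g_w(q_v - q_w) ∂_{p_w} ∈ 𝓜`. Bracketing with `∂_{q_v}` shows that `S` is closed
under `g ↦ g'`, and the double bracket `[[g, X₀], h] = -(g h)'` shows that it is closed under
`(g, h) ↦ (g h)'`. Hence the constant families `e` that have an antiderivative in `S` form an
algebra `E`: if `g' = e` and `h' = e'`, then `(g h)'' = 2 e e'`.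

Take `f ∈ S` with pairwise inequivalent nonconstant components, and let `d` be its maximal degree.
The constants `c = f^(d)` lie in `E`, hence so does the indicator of each set
`A = {w | c_w = c_i}` with `c_i ≠ 0`. Its antiderivative `y_w = X - x_w` on `A` gives `S` the Euler
operator `g ↦ y g'`, which extracts the values at `y = 0` of `f` and all its derivatives, as
constants in `S`. Multiplying them by `f^(d-2)` puts them into `E` up to the factor `c` if `d ≥ 2`.
If two members of `A` have the same values, their components have the same Taylor expansions in `y`
and are equivalent; if `d = 1`, all components in `A` are translates of each other. So `E`
separates `i` from all other indices and contains its indicator, that is, `∂_{p_i} ∈ 𝓜`. Applied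
to the neighbours of `v` with `∂_{p_w} ∉ 𝓜`, this shows that there are none.
-/

open scoped Classical
open Polynomial

noncomputable section

/-- Phase space ℝ^{2|V|}: positions `q = x.1` and momenta `p = x.2`. -/
abbrev Phase (V : Type) := (V → ℝ) × (V → ℝ)

/-- Lie bracket of vector fields: `[Y,Z](x) = DZ(x)·Y(x) − DY(x)·Z(x)`. -/
def lieB {V : Type} [Fintype V] (Y Z : Phase V → Phase V) : Phase V → Phase V :=
  fun x => fderiv ℝ Z x (Y x) - fderiv ℝ Y x (Z x)

/-- The constant vector field `∂_{p_v}`. -/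
def dp {V : Type} [Fintype V] [DecidableEq V] (v : V) : Phase V → Phase V :=
  fun _ => (0, Pi.single v 1)

/-- The constant vector field `∂_{q_v}`. -/
def dq {V : Type} [Fintype V] [DecidableEq V] (v : V) : Phase V → Phase V :=
  fun _ => (Pi.single v 1, 0)

/-- The constant vector field `∑_{v ∈ A} ∂_{p_v}`. -/
def dpSum {V : Type} [Fintype V] [DecidableEq V] (A : Finset V) : Phase V → Phase V :=
  fun _ => (0, ∑ v ∈ A, Pi.single v 1)

/-- The constant vector field `∑_{v ∈ A} ∂_{q_v}`. -/
def dqSum {V : Type} [Fintype V] [DecidableEq V] (A : Finset V) : Phase V → Phase V :=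
  fun _ => (∑ v ∈ A, Pi.single v 1, 0)

/-- The drift vector field
`X₀ = −∑_{v∈V*} γ_v p_v ∂_{p_v} + ∑_{v∈V} (p_v ∂_{q_v} − U_v'(q_v) ∂_{p_v})
      − ∑_{{u,v}∈E} V_{uv}'(q_u − q_v)(∂_{p_u} − ∂_{p_v})`,
written componentwise (using the symmetry `V_{vu}(x) = V_{uv}(−x)` of the
interaction potentials, the `∂_{p_v}`-component of the edge term at a vertex `v` is
`−∑_{w ~ v} V_{vw}'(q_v − q_w)`). -/
def X0 {V : Type} [Fintype V] [DecidableEq V] (G : SimpleGraph V) [DecidableRel G.Adj]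
    (γ : V → ℝ) (U : V → ℝ → ℝ) (Vp : V → V → Polynomial ℝ) : Phase V → Phase V :=
  fun x =>
    (x.2, fun v =>
      -(γ v) * x.2 v - deriv (U v) (x.1 v) -
        ∑ w ∈ Finset.univ.filter (fun w => G.Adj v w),
          (derivative (Vp v w)).eval (x.1 v - x.1 w))

/-- The smallest collection `𝓜` of vector fields on `ℝ^{2|V|}` that contains `∂_{p_v}`
for every `v ∈ V*`, and is closed under linear combinations, Lie brackets,
bracketing with `X₀`, and multiplication by smooth scalar functions. -/
inductive MM {V : Type} [Fintype V] [DecidableEq V] (Vstar : Finset V)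
    (X₀ : Phase V → Phase V) : (Phase V → Phase V) → Prop
  | basic (v : V) (hv : v ∈ Vstar) : MM Vstar X₀ (dp v)
  | add {Y Z : Phase V → Phase V} : MM Vstar X₀ Y → MM Vstar X₀ Z → MM Vstar X₀ (Y + Z)
  | smul (a : ℝ) {Y : Phase V → Phase V} : MM Vstar X₀ Y → MM Vstar X₀ (a • Y)
  | lie {Y Z : Phase V → Phase V} : MM Vstar X₀ Y → MM Vstar X₀ Z → MM Vstar X₀ (lieB Y Z)
  | lieX {Y : Phase V → Phase V} : MM Vstar X₀ Y → MM Vstar X₀ (lieB Y X₀)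
  | mulS (f : Phase V → ℝ) (hf : ContDiff ℝ (⊤ : ℕ∞) f) {Y : Phase V → Phase V} :
      MM Vstar X₀ Y → MM Vstar X₀ (fun x => f x • Y x)

/-- A vertex `v` is controllable if `∂_{q_v} ∈ 𝓜` and `∂_{p_v} ∈ 𝓜`. -/
def Controllable {V : Type} [Fintype V] [DecidableEq V] (Vstar : Finset V)
    (X₀ : Phase V → Phase V) (v : V) : Prop :=
  MM Vstar X₀ (dq v) ∧ MM Vstar X₀ (dp v)

/-- Two polynomials are equivalent if `f(·) = g(· + δ)` for some `δ ∈ ℝ`. -/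
def PolyEquiv (f g : Polynomial ℝ) : Prop :=
  ∃ δ : ℝ, ∀ x : ℝ, f.eval x = g.eval (x + δ)

section Algebra

variable {ι K : Type*} [Field K]

/-! ### Separation of points -/

lemma indicator_mem_of_separates [Finite ι] (E : NonUnitalSubalgebra K (ι → K)) {A : Set ι}
    {u : ι → K} (hu : u ∈ E) (huA : ∀ i ∈ A, u i = 1)
    (hsep : ∀ j ∉ A, ∃ e ∈ E, ∃ a, (∀ i ∈ A, e i = a) ∧ e j ≠ a) : A.indicator 1 ∈ E := by
  suffices h : ∀ B : Set ι, B.Finite → Disjoint A B →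
      ∃ e ∈ E, (∀ i ∈ A, e i = 1) ∧ ∀ j ∈ B, e j = 0 by
    obtain ⟨e, he, heA, he0⟩ := h Aᶜ Aᶜ.toFinite disjoint_compl_right
    convert he
    funext i
    by_cases hi : i ∈ A
    · simp [hi, heA]
    · simp [hi, he0]
  intro B hB
  induction B, hB using Set.Finite.induction_on with
  | empty => exact fun _ => ⟨u, hu, huA, by simp⟩
  | @insert j B _ _ ih =>
    intro hAB
    rw [Set.disjoint_insert_right] at hAB
    obtain ⟨e, he, heA, heB⟩ := ih hAB.2
    obtain ⟨e', he', a, he'A, hja⟩ := hsep j hAB.1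
    refine ⟨(a - e' j)⁻¹ • (e' * e - e' j • e),
      E.smul_mem' _ (sub_mem (mul_mem he' he) (E.smul_mem' _ he)), fun i hi => ?_, ?_⟩
    · simp [heA i hi, he'A i hi, inv_mul_cancel₀ (sub_ne_zero.2 hja.symm)]
    · rintro i (rfl | hi)
      · simp
      · simp [heB i hi]

lemma indicator_levelSet_mem [Finite ι] (E : NonUnitalSubalgebra K (ι → K)) {e : ι → K}
    (he : e ∈ E) {a : K} (ha : a ≠ 0) : {i | e i = a}.indicator 1 ∈ E :=
  indicator_mem_of_separates E (E.smul_mem' a⁻¹ he)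
    (fun i (hi : e i = a) => by simp [hi, ha])
    fun _ hj => ⟨e, he, a, fun _ hi => hi, hj⟩

/-! ### Polynomials -/

section Polynomial

variable {R : Type*} [CommRing R] {p q : R[X]}

lemma natDegree_euler_sub_le {n : ℕ} (hp : p.natDegree ≤ n + 1) (r : R) :
    ((X - C r) * derivative p - ((n : R) + 1) • p).natDegree ≤ n := by
  rw [natDegree_le_iff_coeff_eq_zero]
  rintro (_ | k) hk
  · omega
  rw [coeff_sub, coeff_smul, sub_mul, coeff_sub, coeff_X_mul, coeff_C_mul, coeff_derivative,
    coeff_derivative, coeff_eq_zero_of_natDegree_lt (by omega : p.natDegree < k + 1 + 1)]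
  obtain rfl | hnk : k = n ∨ n < k := by omega
  · simp [mul_comm]
  · simp [coeff_eq_zero_of_natDegree_lt (by omega : p.natDegree < k + 1)]

lemma iterate_derivative_eq_C_of_natDegree_le {n : ℕ} (hp : p.natDegree ≤ n) :
    derivative^[n] p = C (n.factorial * p.coeff n) := by
  rw [eq_C_of_natDegree_le_zero ((natDegree_iterate_derivative p n).trans (by omega)),
    coeff_iterate_derivative]
  simp [Nat.descFactorial_self]

variable [IsAddTorsionFree R]

lemma eq_taylor_of_eval_iterate_derivative {r s : R}
    (h : ∀ k, (derivative^[k] p).eval r = (derivative^[k] q).eval s) :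
    p = taylor (s - r) q := by
  have htaylor : taylor r p = taylor s q := by
    ext k
    have hk := h k
    simp only [← factorial_smul_hasseDeriv, LinearMap.smul_apply, eval_smul] at hk
    rw [taylor_coeff, taylor_coeff]
    exact nsmul_right_injective k.factorial_ne_zero hk
  apply taylor_injective r
  rw [htaylor, taylor_taylor, add_sub_cancel]

lemma eq_X_add_C_of_derivative_eq_C {a : R} (h : derivative p = C a) :
    p = C a * X + C (p.coeff 0) := by
  have hconst := eq_C_of_derivative_eq_zero (p := p - C a * X) (by simp [h])
  rw [← sub_eq_iff_eq_add', hconst]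
  simp

lemma exists_eq_taylor_of_derivative_eq_C [CharZero K] {p q : K[X]} {a : K} (ha : a ≠ 0)
    (hp : derivative p = C a) (hq : derivative q = C a) : ∃ δ, p = taylor δ q := by
  refine ⟨a⁻¹ * (p.coeff 0 - q.coeff 0), ?_⟩
  rw [eq_X_add_C_of_derivative_eq_C hp, eq_X_add_C_of_derivative_eq_C hq]
  simp only [map_add, taylor_mul, taylor_C, taylor_X, mul_add, ← C_mul, mul_inv_cancel_left₀ ha]
  simp [add_assoc]

end Polynomial

/-! ### Families of polynomials -/

/-- A linear space of families of polynomials that is closed under componentwise differentiation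
`g ↦ g'` and under the product `(g, h) ↦ (g h)'`. -/
structure DerivClosed (S : Submodule K (ι → K[X])) : Prop where
  deriv_mem : ∀ g ∈ S, derivative ∘ g ∈ S
  deriv_mul_mem : ∀ g ∈ S, ∀ h ∈ S, derivative ∘ (g * h) ∈ S

namespace DerivClosed

variable {S : Submodule K (ι → K[X])}

lemma iterate_deriv_mem (hS : DerivClosed S) {f : ι → K[X]} (hf : f ∈ S) (k : ℕ) :
    derivative^[k] ∘ f ∈ S := by
  induction k with
  | zero => exact hf
  | succ k ih =>
    rw [Function.iterate_succ', Function.comp_assoc]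
    exact hS.deriv_mem _ ih

variable [CharZero K]

/-- The algebra of those constant families that have an antiderivative in `S`; unlike the space of
all constant families in `S`, it is closed under products. -/
def integrableConstants (hS : DerivClosed S) : NonUnitalSubalgebra K (ι → K) where
  carrier := {e | ∃ g ∈ S, derivative ∘ g = C ∘ e}
  zero_mem' := ⟨0, S.zero_mem, by funext i; simp⟩
  add_mem' := by
    rintro e e' ⟨g, hg, hge⟩ ⟨h, hh, hhe⟩
    refine ⟨g + h, S.add_mem hg hh, funext fun i => ?_⟩
    simpa using congr($hge i + $hhe i)
  smul_mem' := by
    rintro a e ⟨g, hg, hge⟩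
    refine ⟨a • g, S.smul_mem a hg, funext fun i => ?_⟩
    simpa [smul_eq_C_mul] using congr(a • $hge i)
  -- If `g' = e` and `h' = e'`, then `(g h)'' = 2 e e'`.
  mul_mem' := by
    rintro e e' ⟨g, hg, hge⟩ ⟨h, hh, hhe⟩
    refine ⟨(2 : K)⁻¹ • (derivative ∘ (g * h)), S.smul_mem _ (hS.deriv_mul_mem g hg h hh),
      funext fun i => ?_⟩
    have hgi : derivative (g i) = C (e i) := congrFun hge i
    have hhi : derivative (h i) = C (e' i) := congrFun hhe i
    simp only [Function.comp_apply, Pi.smul_apply, Pi.mul_apply, derivative_mul,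
      derivative_add, hgi, hhi, derivative_C, smul_eq_C_mul, zero_mul, mul_zero, add_zero, zero_add,
      ← C_mul, ← C_add]
    congr 1
    ring

lemma mem_integrableConstants_of_iterate (hS : DerivClosed S) {f : ι → K[X]} (hf : f ∈ S) {m : ℕ}
    {c : ι → K} (hc : derivative^[m + 1] ∘ f = C ∘ c) : c ∈ hS.integrableConstants :=
  ⟨_, hS.iterate_deriv_mem hf m, by rw [← hc, Function.iterate_succ', Function.comp_assoc]⟩

lemma C_comp_mem (hS : DerivClosed S) {e : ι → K} (he : e ∈ hS.integrableConstants) :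
    C ∘ e ∈ S := by
  obtain ⟨g, hg, hge⟩ := he
  exact hge ▸ hS.deriv_mem g hg

lemma mul_mem_integrableConstants (hS : DerivClosed S) {e c : ι → K} (he : C ∘ e ∈ S)
    {h : ι → K[X]} (hh : h ∈ S) (hc : derivative ∘ derivative ∘ h = C ∘ c) :
    e * c ∈ hS.integrableConstants := by
  refine ⟨_, hS.deriv_mul_mem _ he h hh, funext fun i => ?_⟩
  have hci : derivative (derivative (h i)) = C (c i) := congrFun hc i
  simp [hci]

lemma exists_variable_mem (hS : DerivClosed S) {A : Set ι}
    (hA : A.indicator 1 ∈ hS.integrableConstants) :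
    ∃ x : ι → K, A.indicator (fun i => X - C (x i)) ∈ S := by
  obtain ⟨g, hg, hgA⟩ := hA
  refine ⟨fun i => -(g i).coeff 0, ?_⟩
  convert S.smul_mem (2 : K)⁻¹ (hS.deriv_mul_mem g hg g hg) using 1
  funext i
  have hgi : derivative (g i) = C (A.indicator 1 i) := congrFun hgA i
  by_cases hi : i ∈ A
  · rw [Set.indicator_of_mem hi, Pi.one_apply] at hgi
    have hgX : g i = X + C ((g i).coeff 0) := by
      simpa using eq_X_add_C_of_derivative_eq_C hgi
    simp only [Set.indicator_of_mem hi, Pi.smul_apply, Function.comp_apply, Pi.mul_apply,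
      derivative_mul, hgi, C_1, one_mul, mul_one, ← two_smul K (g i), smul_smul]
    rw [inv_mul_cancel₀ two_ne_zero, one_smul, C_neg, sub_neg_eq_add, ← hgX]
  · simp [hi, hgi]

/-- The Euler operator `g ↦ y g'` of `y = X - x` has the powers of `y` as eigenvectors, so
composing it with `- n` for `n = deg g, …, 1` leaves only the value of `g` at `y = 0`. -/
lemma C_comp_eval_mem_of_support (hS : DerivClosed S) {A : Set ι} {x : ι → K}
    (hx : A.indicator (fun i => X - C (x i)) ∈ S) {n : ℕ} {g : ι → K[X]} (hg : g ∈ S)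
    (hgA : ∀ i ∉ A, g i = 0) (hdeg : ∀ i, (g i).natDegree ≤ n) :
    C ∘ (fun i => (g i).eval (x i)) ∈ S := by
  induction n generalizing g with
  | zero =>
    convert hg using 1
    funext i
    obtain ⟨a, ha⟩ := natDegree_eq_zero.1 (Nat.le_zero.1 (hdeg i))
    simp [← ha]
  | succ n ih =>
    let euler : ι → K[X] := fun i => (X - C (x i)) * derivative (g i) - ((n : K) + 1) • g i
    have heuler : euler ∈ S := by
      convert S.sub_mem (hS.deriv_mul_mem _ hx g hg) (S.smul_mem ((n : K) + 2) hg) using 1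
      funext i
      by_cases hi : i ∈ A
      · simp only [euler, Pi.sub_apply, Pi.smul_apply, Function.comp_apply, Pi.mul_apply,
          Set.indicator_of_mem hi, derivative_mul, derivative_X_sub_C, smul_eq_C_mul, C_add, C_1,
          C_ofNat]
        ring
      · simp [euler, hgA i hi]
    have hval := ih heuler (fun i hi => by simp [euler, hgA i hi])
      fun i => natDegree_euler_sub_le (hdeg i) (x i)
    have hn : (n : K) + 1 ≠ 0 := n.cast_add_one_ne_zero
    convert S.smul_mem (-((n : K) + 1)⁻¹) hval using 1
    funext i
    simp only [euler, Function.comp_apply, Pi.smul_apply, eval_sub, eval_mul, eval_X, eval_C,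
      eval_smul, sub_self, zero_mul, zero_sub, smul_C, smul_eq_mul, neg_mul_neg,
      inv_mul_cancel_left₀ hn]

lemma C_comp_indicator_eval_mem [Finite ι] (hS : DerivClosed S) {A : Set ι} {x : ι → K}
    (hx : A.indicator (fun i => X - C (x i)) ∈ S) {g : ι → K[X]} (hg : g ∈ S) :
    C ∘ A.indicator (fun i => (g i).eval (x i)) ∈ S := by
  have hmem := hS.deriv_mul_mem _ hx g hg
  obtain ⟨n, hn⟩ := Finite.exists_le fun i =>
    ((derivative ∘ (A.indicator (fun i => X - C (x i)) * g)) i).natDegree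
  convert hS.C_comp_eval_mem_of_support hx hmem (fun i hi => by simp [hi]) hn using 1
  funext i
  by_cases hi : i ∈ A <;> simp [hi]

/-- Indices `i` and `j` at which `f` has the same degree and leading coefficient are separated by
the values of the derivatives of `f` at a common origin. -/
lemma exists_ne_of_iterate_derivative_eq [Finite ι] (hS : DerivClosed S) {f : ι → K[X]}
    (hf : f ∈ S) {m : ℕ} {c : ι → K} (hc : derivative^[m + 1] ∘ f = C ∘ c) {i j : ι}
    (hci : c i ≠ 0) (hij : c j = c i) (hineq : ∀ δ, f i ≠ taylor δ (f j)) :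
    ∃ e ∈ hS.integrableConstants, e i ≠ e j := by
  have hcE := hS.mem_integrableConstants_of_iterate hf hc
  by_contra! hE
  obtain _ | m := m
  · obtain ⟨δ, hδ⟩ := exists_eq_taylor_of_derivative_eq_C hci (congrFun hc i)
      ((congrFun hc j).trans (congrArg C hij))
    exact hineq δ hδ
  obtain ⟨x, hx⟩ := hS.exists_variable_mem (indicator_levelSet_mem _ hcE hci)
  refine hineq _ (eq_taylor_of_eval_iterate_derivative (r := x i) (s := x j) fun k => ?_)
  have hc' : derivative ∘ derivative ∘ derivative^[m] ∘ f = C ∘ c := by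
    rw [← hc, Function.iterate_succ', Function.iterate_succ']
    rfl
  have hval := hE _ (hS.mul_mem_integrableConstants
    (hS.C_comp_indicator_eval_mem hx (hS.iterate_deriv_mem hf k)) (hS.iterate_deriv_mem hf m) hc')
  simpa [hij, hci] using hval

theorem single_mem_of_natDegree_le [Finite ι] [DecidableEq ι] (hS : DerivClosed S)
    {f : ι → K[X]} (hf : f ∈ S) {i : ι} (hpos : 0 < (f i).natDegree)
    (hmax : ∀ j, (f j).natDegree ≤ (f i).natDegree)
    (hineq : ∀ j ≠ i, ∀ δ, f i ≠ taylor δ (f j)) : Pi.single i 1 ∈ S := by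
  obtain ⟨m, hm⟩ := Nat.exists_eq_add_one.2 hpos
  let c : ι → K := fun j => (m + 1).factorial * (f j).coeff (m + 1)
  have hc : derivative^[m + 1] ∘ f = C ∘ c := funext fun j =>
    iterate_derivative_eq_C_of_natDegree_le (hm ▸ hmax j)
  have hci : c i ≠ 0 := by
    have hlead : (f i).coeff (m + 1) ≠ 0 := by
      rw [← hm, coeff_natDegree, leadingCoeff_ne_zero]
      exact ne_zero_of_natDegree_gt hpos
    exact mul_ne_zero (mod_cast (m + 1).factorial_ne_zero) hlead
  have hcE := hS.mem_integrableConstants_of_iterate hf hc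
  have hsep : ∀ j ≠ i, ∃ e ∈ hS.integrableConstants, e i ≠ e j := fun j hj => by
    by_cases hij : c j = c i
    · exact hS.exists_ne_of_iterate_derivative_eq hf hc hci hij (hineq j hj)
    · exact ⟨c, hcE, Ne.symm hij⟩
  have hsingle : ({i} : Set ι).indicator 1 ∈ hS.integrableConstants :=
    indicator_mem_of_separates _ (indicator_levelSet_mem _ hcE hci) (by simp) fun j hj => by
      obtain ⟨e, he, hne⟩ := hsep j hj
      exact ⟨e, he, e i, by simp, hne.symm⟩
  convert hS.C_comp_mem hsingle using 1
  funext j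
  by_cases hj : j = i
  · subst hj
    simp
  · simp [hj]

end DerivClosed

end Algebra

/-! ### Vector fields on phase space -/

section VectorFields

variable {V : Type}

/-- The vector field `∑_w g_w(q_v - q_w) ∂_{p_w}` attached to a family of polynomials `g`. -/
def polyField (v : V) : (V → ℝ[X]) →ₗ[ℝ] Phase V → Phase V where
  toFun g x := (0, fun w => (g w).eval (x.1 v - x.1 w))
  map_add' g h := by
    funext x
    ext w <;> simp
  map_smul' a g := by
    funext x
    ext w <;> simp

lemma polyField_apply (v : V) (g : V → ℝ[X]) (x : Phase V) :
    polyField v g x = (0, fun w => (g w).eval (x.1 v - x.1 w)) :=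
  rfl

lemma hasFDerivAt_q (x : Phase V) (w : V) : HasFDerivAt (fun x : Phase V => x.1 w)
    (.proj w ∘L .fst ℝ (V → ℝ) (V → ℝ)) x :=
  (ContinuousLinearMap.proj w ∘L .fst ℝ (V → ℝ) (V → ℝ)).hasFDerivAt

lemma hasFDerivAt_p (x : Phase V) (w : V) : HasFDerivAt (fun x : Phase V => x.2 w)
    (.proj w ∘L .snd ℝ (V → ℝ) (V → ℝ)) x :=
  (ContinuousLinearMap.proj w ∘L .snd ℝ (V → ℝ) (V → ℝ)).hasFDerivAt

section Calculus

variable [Finite V]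

lemma hasFDerivAt_eval_sub (p : ℝ[X]) (x : Phase V) (v w : V) :
    HasFDerivAt (fun x : Phase V => p.eval (x.1 v - x.1 w))
      ((derivative p).eval (x.1 v - x.1 w) •
        (.proj v ∘L .fst ℝ (V → ℝ) (V → ℝ) - .proj w ∘L .fst ℝ (V → ℝ) (V → ℝ))) x := by
  have := Fintype.ofFinite V
  exact (p.hasDerivAt (x.1 v - x.1 w)).comp_hasFDerivAt (h₂ := fun t => p.eval t) x
    ((hasFDerivAt_q x v).fun_sub (hasFDerivAt_q x w))

lemma fderiv_polyField (v : V) (g : V → ℝ[X]) (x h : Phase V) :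
    fderiv ℝ (polyField v g) x h =
      (0, fun w => (derivative (g w)).eval (x.1 v - x.1 w) * (h.1 v - h.1 w)) := by
  have := Fintype.ofFinite V
  have H : HasFDerivAt (polyField v g) _ x :=
    (hasFDerivAt_const (0 : V → ℝ) x).prodMk
      (hasFDerivAt_pi.2 fun w => hasFDerivAt_eval_sub (g w) x v w)
  rw [H.fderiv]
  ext w <;> simp

end Calculus

/-- The second derivatives `V''_{vw}` of the interaction potentials at `v`, extended by zero to
the vertices `w` that are not neighbours of `v`. -/
def interactionHessian (G : SimpleGraph V) [DecidableRel G.Adj] (Vp : V → V → ℝ[X]) (v : V) :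
    V → ℝ[X] :=
  fun w => if G.Adj v w then derivative (derivative (Vp v w)) else 0

lemma interactionHessian_self (G : SimpleGraph V) [DecidableRel G.Adj] (Vp : V → V → ℝ[X])
    (v : V) : interactionHessian G Vp v v = 0 :=
  if_neg G.irrefl

lemma natDegree_interactionHessian_pos_iff {G : SimpleGraph V} [DecidableRel G.Adj]
    {Vp : V → V → ℝ[X]} {v w : V} :
    0 < (interactionHessian G Vp v w).natDegree ↔ G.Adj v w ∧ 3 ≤ (Vp v w).natDegree := by
  by_cases hvw : G.Adj v w
  · rw [interactionHessian, if_pos hvw, natDegree_derivative, natDegree_derivative,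
      and_iff_right hvw]
    omega
  · simp [interactionHessian, hvw]

lemma eval_neg_derivative_derivative {p q : ℝ[X]} (h : ∀ x, q.eval x = p.eval (-x)) (x : ℝ) :
    (derivative (derivative q)).eval (-x) = (derivative (derivative p)).eval x := by
  have hqp : q = p.comp (-X) := Polynomial.funext fun t => by simp [h t]
  simp [hqp, derivative_comp]

section Brackets

variable [Fintype V]

lemma polyField_single_one [DecidableEq V] (v w : V) :
    polyField v (Pi.single w 1) = dp w := by
  funext x
  ext z
  · rfl
  · by_cases hz : z = w
    · subst hz
      simp [polyField_apply, dp]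
    · simp [polyField_apply, dp, hz]

lemma contDiff_eval_sub (p : ℝ[X]) (v w : V) :
    ContDiff ℝ (⊤ : ℕ∞) (fun x : Phase V => p.eval (x.1 v - x.1 w)) := by
  have hp : ContDiff ℝ (⊤ : ℕ∞) fun t => p.eval t := by
    simpa using p.contDiff_aeval (𝕜 := ℝ) (⊤ : ℕ∞)
  exact hp.comp (by fun_prop : ContDiff ℝ (⊤ : ℕ∞) fun x : Phase V => x.1 v - x.1 w)

lemma lieB_const (c : Phase V) (Z : Phase V → Phase V) (x : Phase V) :
    lieB (fun _ => c) Z x = fderiv ℝ Z x c := by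
  simp [lieB]

variable [DecidableEq V] {G : SimpleGraph V} [DecidableRel G.Adj] {γ : V → ℝ} {U : V → ℝ → ℝ}
  {Vp : V → V → ℝ[X]}

lemma fderiv_X0 (hU : ∀ v, ContDiff ℝ (⊤ : ℕ∞) (U v)) (x h : Phase V) :
    fderiv ℝ (X0 G γ U Vp) x h =
      (h.2, fun v => -(γ v) * h.2 v - deriv (deriv (U v)) (x.1 v) * h.1 v -
        ∑ w with G.Adj v w,
          (derivative (derivative (Vp v w))).eval (x.1 v - x.1 w) * (h.1 v - h.1 w)) := by
  have hU' : ∀ v t, HasDerivAt (deriv (U v)) (deriv (deriv (U v)) t) t := fun v t =>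
    ((contDiff_infty_iff_deriv.1 (hU v)).2.differentiable (by simp) t).hasDerivAt
  have H : HasFDerivAt (X0 G γ U Vp) _ x :=
    (ContinuousLinearMap.snd ℝ (V → ℝ) (V → ℝ)).hasFDerivAt.prodMk
      (hasFDerivAt_pi.2 fun v =>
        (((hasFDerivAt_p x v).const_mul (-(γ v))).sub
          ((hU' v (x.1 v)).comp_hasFDerivAt x (hasFDerivAt_q x v))).sub
          (HasFDerivAt.fun_sum fun w _ => hasFDerivAt_eval_sub (derivative (Vp v w)) x v w))
  rw [H.fderiv]
  ext w <;> simp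

lemma lieB_dp_X0 (hU : ∀ v, ContDiff ℝ (⊤ : ℕ∞) (U v)) (v : V) :
    lieB (dp v) (X0 G γ U Vp) = dq v - γ v • dp v := by
  funext x
  refine (lieB_const _ _ x).trans ?_
  rw [fderiv_X0 hU]
  ext w
  · simp [dq, dp]
  · obtain rfl | hw := eq_or_ne w v
    · simp [dq, dp]
    · simp [dq, dp, hw]

lemma lieB_dq_X0 (hU : ∀ v, ContDiff ℝ (⊤ : ℕ∞) (U v))
    (hsym : ∀ u v, G.Adj u v → ∀ x : ℝ, (Vp v u).eval x = (Vp u v).eval (-x)) (v : V) :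
    lieB (dq v) (X0 G γ U Vp) = polyField v (interactionHessian G Vp v) - fun x =>
      (deriv (deriv (U v)) (x.1 v) +
        ∑ w, (interactionHessian G Vp v w).eval (x.1 v - x.1 w)) • dp v x := by
  funext x
  refine (lieB_const _ _ x).trans ?_
  rw [fderiv_X0 hU, Pi.sub_apply, polyField_apply]
  ext w
  · simp [dp]
  obtain rfl | hwv := eq_or_ne w v
  · have hsum : ∑ z with G.Adj w z, (derivative (derivative (Vp w z))).eval (x.1 w - x.1 z) *
        ((Pi.single w 1 : V → ℝ) w - (Pi.single w 1 : V → ℝ) z) =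
        ∑ z, (interactionHessian G Vp w z).eval (x.1 w - x.1 z) := by
      rw [Finset.sum_filter]
      refine Finset.sum_congr rfl fun z _ => ?_
      by_cases hz : G.Adj w z
      · simp [interactionHessian, hz, hz.ne']
      · simp [interactionHessian, hz]
    simp only [hsum]
    simp only [dp, Prod.smul_mk, Prod.mk_sub_mk, Pi.sub_apply, Pi.smul_apply, Pi.zero_apply,
      interactionHessian_self, eval_zero, Pi.single_eq_same, smul_eq_mul, mul_zero, mul_one]
    ring
  · by_cases hadj : G.Adj v w
    · have hneg := eval_neg_derivative_derivative (hsym v w hadj) (x.1 v - x.1 w)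
      rw [neg_sub] at hneg
      simp [dp, interactionHessian, hwv, hadj, hadj.symm, Pi.single_apply, hneg]
    · simp [dp, interactionHessian, hwv, hadj, G.adj_comm w v, Pi.single_apply]

lemma lieB_dq_polyField {v : V} {g : V → ℝ[X]} (hg : g v = 0) :
    lieB (dq v) (polyField v g) = polyField v (derivative ∘ g) := by
  funext x
  refine (lieB_const _ _ x).trans ?_
  rw [fderiv_polyField]
  ext w
  · simp [polyField_apply]
  · obtain rfl | hw := eq_or_ne w v
    · simp [polyField_apply, hg]
    · simp [polyField_apply, hw]

lemma lieB_polyField_X0 (hU : ∀ v, ContDiff ℝ (⊤ : ℕ∞) (U v)) (v : V) (g : V → ℝ[X]) :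
    lieB (polyField v g) (X0 G γ U Vp) = fun x =>
      (fun w => (g w).eval (x.1 v - x.1 w), fun w => -(γ w) * (g w).eval (x.1 v - x.1 w) -
        (derivative (g w)).eval (x.1 v - x.1 w) * (x.2 v - x.2 w)) := by
  funext x
  rw [lieB, fderiv_X0 hU, fderiv_polyField]
  ext w <;> simp [polyField_apply, X0]

lemma fderiv_lieB_polyField_X0 (hU : ∀ v, ContDiff ℝ (⊤ : ℕ∞) (U v)) (v : V) (g : V → ℝ[X])
    (x : Phase V) (k : V → ℝ) :
    fderiv ℝ (lieB (polyField v g) (X0 G γ U Vp)) x (0, k) =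
      (0, fun w => -((derivative (g w)).eval (x.1 v - x.1 w) * (k v - k w))) := by
  rw [lieB_polyField_X0 hU]
  have H : HasFDerivAt (fun x : Phase V =>
      ((fun w => (g w).eval (x.1 v - x.1 w), fun w => -(γ w) * (g w).eval (x.1 v - x.1 w) -
        (derivative (g w)).eval (x.1 v - x.1 w) * (x.2 v - x.2 w)) : Phase V)) _ x :=
    (hasFDerivAt_pi.2 fun w => hasFDerivAt_eval_sub (g w) x v w).prodMk
      (hasFDerivAt_pi.2 fun w =>
        ((hasFDerivAt_eval_sub (g w) x v w).const_mul (-(γ w))).sub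
          ((hasFDerivAt_eval_sub (derivative (g w)) x v w).mul
            ((hasFDerivAt_p x v).sub (hasFDerivAt_p x w))))
  rw [H.fderiv]
  ext w <;> simp

lemma lieB_lieB_polyField (hU : ∀ v, ContDiff ℝ (⊤ : ℕ∞) (U v)) {v : V} {g h : V → ℝ[X]}
    (hg : g v = 0) (hh : h v = 0) :
    lieB (lieB (polyField v g) (X0 G γ U Vp)) (polyField v h) =
      -polyField v (derivative ∘ (g * h)) := by
  funext x
  rw [lieB, fderiv_polyField, polyField_apply v h, fderiv_lieB_polyField_X0 hU,
    lieB_polyField_X0 hU]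
  ext w
  · simp [polyField_apply]
  · simp only [polyField_apply, hg, hh, Prod.mk_sub_mk, Prod.neg_mk, Pi.neg_apply, Pi.sub_apply,
      Pi.mul_apply, Function.comp_apply, derivative_mul, eval_add, eval_mul, eval_zero]
    ring

end Brackets

end VectorFields

/-! ### Spread of controllability -/

namespace MM

variable {V : Type} [Fintype V] [DecidableEq V] {Vstar : Finset V} {X₀ : Phase V → Phase V}

/-- The collection `𝓜` as a real linear space. Only for `V* ≠ ∅` does it contain `0`. -/
def toSubmodule (X₀ : Phase V → Phase V) (hne : Vstar.Nonempty) :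
    Submodule ℝ (Phase V → Phase V) where
  carrier := {Y | MM Vstar X₀ Y}
  zero_mem' := by
    obtain ⟨v, hv⟩ := hne
    simpa using smul 0 (basic (X₀ := X₀) v hv)
  add_mem' := add
  smul_mem' a _ := smul a

/-- The families `g` whose field `polyField v g` belongs to `𝓜`. The requirement `g v = 0` makes
`∂_{q_v}` act on them by differentiation, as `q_v - q_w` is constant for `w = v`. -/
def polyFamilies (X₀ : Phase V → Phase V) (hne : Vstar.Nonempty) (v : V) :
    Submodule ℝ (V → ℝ[X]) :=
  (toSubmodule X₀ hne).comap (polyField v) ⊓ LinearMap.ker (LinearMap.proj v)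

lemma mem_polyFamilies {hne : Vstar.Nonempty} {v : V} {g : V → ℝ[X]} :
    g ∈ polyFamilies X₀ hne v ↔ MM Vstar X₀ (polyField v g) ∧ g v = 0 :=
  Iff.rfl

lemma polyField_of_dp (hne : Vstar.Nonempty) (v : V) {g : V → ℝ[X]}
    (h : ∀ w, g w ≠ 0 → MM Vstar X₀ (dp w)) : MM Vstar X₀ (polyField v g) := by
  have hsum : polyField v g = ∑ w, fun x => (g w).eval (x.1 v - x.1 w) • dp w x := by
    funext x
    ext w
    · simp [polyField_apply, dp, Finset.sum_apply, Prod.fst_sum]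
    · simp [polyField_apply, dp, Finset.sum_apply, Prod.snd_sum, Pi.single_apply]
  rw [hsum]
  refine (toSubmodule X₀ hne).sum_mem fun w _ => ?_
  by_cases hw : g w = 0
  · convert (toSubmodule X₀ hne).zero_mem using 1
    funext x
    simp [hw]
  · exact (h w hw).mulS _ (contDiff_eval_sub (g w) v w)

lemma indicator_mem_polyFamilies {hne : Vstar.Nonempty} {v : V} {f : V → ℝ[X]}
    (hf : f ∈ polyFamilies X₀ hne v) :
    {w | ¬ MM Vstar X₀ (dp w)}.indicator f ∈ polyFamilies X₀ hne v := by
  set A := {w | ¬ MM Vstar X₀ (dp w)}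
  have hAc : Aᶜ.indicator f ∈ polyFamilies X₀ hne v :=
    mem_polyFamilies.2 ⟨polyField_of_dp hne v fun w hw =>
      not_not.1 (Set.mem_of_indicator_ne_zero hw), Set.indicator_apply_eq_zero.2 fun _ => hf.2⟩
  rw [← add_sub_cancel_right (A.indicator f) (Aᶜ.indicator f), Set.indicator_self_add_compl]
  exact sub_mem hf hAc

lemma dp_of_mem_polyFamilies {hne : Vstar.Nonempty} {v : V}
    (hS : DerivClosed (polyFamilies X₀ hne v)) {f : V → ℝ[X]} (hf : f ∈ polyFamilies X₀ hne v)
    (hineq : ∀ i j, i ≠ j → 0 < (f i).natDegree → ∀ δ, f i ≠ taylor δ (f j)) {u : V}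
    (hu : 0 < (f u).natDegree) : MM Vstar X₀ (dp u) := by
  by_contra hdp
  let A := {w | ¬ MM Vstar X₀ (dp w)}
  have : Nonempty V := ⟨v⟩
  obtain ⟨i, hmax⟩ := Finite.exists_max fun w => (A.indicator f w).natDegree
  have hpos : 0 < (A.indicator f i).natDegree := by
    refine lt_of_lt_of_le ?_ (hmax u)
    rwa [Set.indicator_of_mem hdp]
  have hiA : i ∈ A := Set.mem_of_indicator_ne_zero (ne_zero_of_natDegree_gt hpos)
  have hineqA : ∀ j ≠ i, ∀ δ, A.indicator f i ≠ taylor δ (A.indicator f j) := fun j hj δ hδ => by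
    have hposj : 0 < (A.indicator f j).natDegree := by rwa [hδ, natDegree_taylor] at hpos
    have hjA : j ∈ A := Set.mem_of_indicator_ne_zero (ne_zero_of_natDegree_gt hposj)
    rw [Set.indicator_of_mem hiA] at hpos
    rw [Set.indicator_of_mem hiA, Set.indicator_of_mem hjA] at hδ
    exact hineq i j hj.symm hpos δ hδ
  have hsingle := hS.single_mem_of_natDegree_le (indicator_mem_polyFamilies hf) hpos hmax hineqA
  rw [mem_polyFamilies, polyField_single_one] at hsingle
  exact hiA hsingle.1

section Drift

variable {G : SimpleGraph V} [DecidableRel G.Adj] {γ : V → ℝ} {U : V → ℝ → ℝ} {Vp : V → V → ℝ[X]}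

lemma dq_of_dp (hU : ∀ v, ContDiff ℝ (⊤ : ℕ∞) (U v)) {v : V}
    (h : MM Vstar (X0 G γ U Vp) (dp v)) : MM Vstar (X0 G γ U Vp) (dq v) := by
  simpa [lieB_dp_X0 hU] using h.lieX.add (h.smul (γ v))

lemma derivClosed_polyFamilies (hne : Vstar.Nonempty) (hU : ∀ v, ContDiff ℝ (⊤ : ℕ∞) (U v))
    {v : V} (h : MM Vstar (X0 G γ U Vp) (dp v)) :
    DerivClosed (polyFamilies (X0 G γ U Vp) hne v) where
  deriv_mem g hg := by
    rw [mem_polyFamilies] at hg ⊢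
    refine ⟨?_, by simp [hg.2]⟩
    rw [← lieB_dq_polyField hg.2]
    exact (h.dq_of_dp hU).lie hg.1
  deriv_mul_mem g hg k hk := by
    rw [mem_polyFamilies] at hg hk ⊢
    refine ⟨?_, by simp [hg.2]⟩
    simpa [lieB_lieB_polyField hU hg.2 hk.2] using (hg.1.lieX.lie hk.1).smul (-1)

lemma interactionHessian_mem_polyFamilies (hne : Vstar.Nonempty)
    (hU : ∀ v, ContDiff ℝ (⊤ : ℕ∞) (U v))
    (hsym : ∀ u v, G.Adj u v → ∀ x : ℝ, (Vp v u).eval x = (Vp u v).eval (-x)) {v : V}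
    (h : MM Vstar (X0 G γ U Vp) (dp v)) :
    interactionHessian G Vp v ∈ polyFamilies (X0 G γ U Vp) hne v := by
  have hU'' : ContDiff ℝ (⊤ : ℕ∞) (deriv (deriv (U v))) :=
    (contDiff_infty_iff_deriv.1 (contDiff_infty_iff_deriv.1 (hU v)).2).2
  have hsmooth : ContDiff ℝ (⊤ : ℕ∞) fun x : Phase V => deriv (deriv (U v)) (x.1 v) +
      ∑ w, (interactionHessian G Vp v w).eval (x.1 v - x.1 w) :=
    (hU''.comp (by fun_prop)).add (ContDiff.sum fun w _ => contDiff_eval_sub _ v w)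
  refine mem_polyFamilies.2 ⟨?_, interactionHessian_self G Vp v⟩
  simpa [lieB_dq_X0 hU hsym] using (h.dq_of_dp hU).lieX.add (h.mulS _ hsmooth)

lemma dp_of_adj (hne : Vstar.Nonempty) (hU : ∀ v, ContDiff ℝ (⊤ : ℕ∞) (U v))
    (hsym : ∀ u v, G.Adj u v → ∀ x : ℝ, (Vp v u).eval x = (Vp u v).eval (-x)) {v u : V}
    (h : MM Vstar (X0 G γ U Vp) (dp v)) (hvu : G.Adj v u) (hdeg : 3 ≤ (Vp v u).natDegree)
    (hineq : ∀ i j, G.Adj v i → G.Adj v j → i ≠ j → 3 ≤ (Vp v i).natDegree →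
      ¬ PolyEquiv (derivative (derivative (Vp v i))) (derivative (derivative (Vp v j)))) :
    MM Vstar (X0 G γ U Vp) (dp u) := by
  refine dp_of_mem_polyFamilies (derivClosed_polyFamilies hne hU h)
    (interactionHessian_mem_polyFamilies hne hU hsym h) (fun i j hij hi δ hδ => ?_) ?_
  · have hj : 0 < (interactionHessian G Vp v j).natDegree := by
      rwa [← natDegree_taylor _ δ, ← hδ]
    obtain ⟨hvi, hdegi⟩ := natDegree_interactionHessian_pos_iff.1 hi
    obtain ⟨hvj, -⟩ := natDegree_interactionHessian_pos_iff.1 hj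
    rw [interactionHessian, if_pos hvi, interactionHessian, if_pos hvj] at hδ
    exact hineq i j hvi hvj hij hdegi ⟨δ, fun x => by rw [hδ, taylor_eval]⟩
  · exact natDegree_interactionHessian_pos_iff.2 ⟨hvu, hdeg⟩

end Drift

end MM

theorem network_controllable_of_pairwise_inequivalent_general
    {V : Type} [Fintype V] [DecidableEq V] (G : SimpleGraph V) [DecidableRel G.Adj]
    (Vstar : Finset V) (γ : V → ℝ) (U : V → ℝ → ℝ) (Vp : V → V → Polynomial ℝ)
    (hU : ∀ v, ContDiff ℝ (⊤ : ℕ∞) (U v))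
    (hsym : ∀ u v, G.Adj u v → ∀ x : ℝ, (Vp v u).eval x = (Vp u v).eval (-x))
    (hineq : ∀ v u w : V, G.Adj v u → G.Adj v w → u ≠ w → 3 ≤ (Vp v u).natDegree →
      ¬ PolyEquiv (derivative (derivative (Vp v u))) (derivative (derivative (Vp v w))))
    {v₀ v : V} (hv₀ : v₀ ∈ Vstar)
    (hpath : Relation.ReflTransGen (fun u w => G.Adj u w ∧ 3 ≤ (Vp u w).natDegree) v₀ v) :
    Controllable Vstar (X0 G γ U Vp) v := by
  have hdp : MM Vstar (X0 G γ U Vp) (dp v) := by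
    induction hpath with
    | refl => exact MM.basic v₀ hv₀
    | tail _ huw ih => exact ih.dp_of_adj ⟨v₀, hv₀⟩ hU hsym huw.1 huw.2 (hineq _)
  exact ⟨hdp.dq_of_dp hU, hdp⟩

/-- Theorem 6.2. Assume `G` is connected, `V*` is nonempty, and for
each vertex `v` the neighbors of `v` are pairwise inequivalent with respect to `v`
(no two distinct neighbors `u, w` of `v` satisfy `V''_{vu}(·) = V''_{vw}(· + δ)`).
Then the network is controllable. -/
theorem network_controllable_of_pairwise_inequivalent
    {V : Type} [Fintype V] [DecidableEq V] (G : SimpleGraph V) [DecidableRel G.Adj]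
    (Vstar : Finset V) (γ : V → ℝ) (U : V → ℝ → ℝ) (Vp : V → V → Polynomial ℝ)
    (hγpos : ∀ v ∈ Vstar, 0 < γ v) (hγ0 : ∀ v ∉ Vstar, γ v = 0)
    (hU : ∀ v, ContDiff ℝ (⊤ : ℕ∞) (U v))
    (hsym : ∀ u v, G.Adj u v → ∀ x : ℝ, (Vp v u).eval x = (Vp u v).eval (-x))
    (hdeg : ∀ u v, G.Adj u v → 3 ≤ (Vp u v).natDegree)
    (hconn : G.Connected) (hne : Vstar.Nonempty)
    (hineq : ∀ v u w : V, G.Adj v u → G.Adj v w → u ≠ w →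
      ¬ PolyEquiv (derivative (derivative (Vp v u))) (derivative (derivative (Vp v w)))) :
    ∀ v : V, Controllable Vstar (X0 G γ U Vp) v := by
  intro v
  obtain ⟨v₀, hv₀⟩ := hne
  have hpath : Relation.ReflTransGen G.Adj v₀ v :=
    (G.reachable_iff_reflTransGen v₀ v).1 (hconn.preconnected v₀ v)
  exact network_controllable_of_pairwise_inequivalent_general G Vstar γ U Vp hU hsym
    (fun v u w hvu hvw huw _ => hineq v u w hvu hvw huw) hv₀
    (.mono (fun u w huw => ⟨huw, hdeg u w huw⟩) v₀ v hpath)
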